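/- For every positive integer k there is a constant C(k) > 0 such that, for every positive integer N, there exists a non-negative integer h ≤ k−1 with 𝓙(𝓜,Q) ≤ C(k) · ( N²R²T^{−1} + R² + N^{(k−h)/k} · 𝓙(𝓜,Q_h) ). -/

import Mathlib

/-!
The choice `h = k - 1` always works. Expanding the coefficients, `(h!)² 𝓙(𝓜,Q_h)` counts the
`(m₁, m₂, f, g)` with `f, g` being `h`-tuples of primes `≤ N^{1/k}` and `m₁ ∏ f` close to `m₂ ∏ g`
(`Jq_eq`). For `h = k` and fixed `m₁, m₂`, such pairs `(f, g)` are of two kinds.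

* `f` and `g` share a prime, `f i = g j`. Deleting it from both tuples leaves the ratio
  `m₁ ∏ f / (m₂ ∏ g)` unchanged, so for given `(i, j)` there are at most `N^{1/k}` times as many
  such pairs as there are close pairs of `(k-1)`-tuples (`card_common_le`).
* `∏ f` and `∏ g` are coprime. Distinct coprime pairs `(a, b)` of positive integers `≤ N` have
  values of `log (a / b)` that are at least `N⁻²` apart, and closeness puts these in an interval of
  length `4π / T`; hence there are at most `1 + 4π N² / T` possible products
  (`card_coprime_pairs_le`), each of which comes from boundedly many tuples (`card_fiber_le`).
  Summation over `m₁, m₂` gives the terms `R²` and `N²R²/T`.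
-/

open scoped Classical

/-- The `n`-th Dirichlet coefficient of
`Q_h(s) = (1/h!)( ∑_{p ≤ N^{1/k}} p^{-s} )^h`, i.e.
`(1/h!) · #{(p₁,…,p_h) : p₁⋯p_h = n, each pᵢ prime ≤ N^{1/k}}`. -/
noncomputable def qcoef (N k h n : ℕ) : ℝ :=
  (Nat.card {f : Fin h → ℕ //
      (∀ i, (f i).Prime ∧ (f i : ℝ) ≤ (N : ℝ) ^ ((1 : ℝ) / (k : ℝ))) ∧
      ∏ i, f i = n} : ℝ) / (h.factorial : ℝ)

/-- `𝓙(𝓜,Q_h) = ∑ q_{n₁}^{(h)} q_{n₂}^{(h)}`, summed over quadruples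
`(m₁,m₂,n₁,n₂) ∈ 𝓜² × ℕ²` with `|log(m₁n₁/(m₂n₂))| ≤ 2π/T`.  (For `h ≤ k` the
coefficients are supported on `1 ≤ n ≤ N`, so the sum over `n₁, n₂` may be taken
over `{1,…,N}`.) -/
noncomputable def Jq (T : ℝ) (𝓜 : Finset ℕ) (N k h : ℕ) : ℝ :=
  ∑ m₁ ∈ 𝓜, ∑ m₂ ∈ 𝓜, ∑ n₁ ∈ Finset.Icc 1 N, ∑ n₂ ∈ Finset.Icc 1 N,
    if |Real.log ((m₁ * n₁ : ℝ) / (m₂ * n₂ : ℝ))| ≤ 2 * Real.pi / T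
      then qcoef N k h n₁ * qcoef N k h n₂ else 0

/-! ### Tuples of primes and the counting form of `𝓙(𝓜,Q_h)` -/

/-- The primes `p ≤ N^{1/k}`. The restriction to `{1,…,N}` is automatic for `k, N ≥ 1`
(see `mem_primeSet`). -/
noncomputable def primeSet (N k : ℕ) : Finset ℕ :=
  (Finset.Icc 1 N).filter (fun p => p.Prime ∧ (p : ℝ) ≤ (N : ℝ) ^ ((1 : ℝ) / (k : ℝ)))

/-- Ordered `h`-tuples of primes `≤ N^{1/k}`. -/
noncomputable def tuples (N k h : ℕ) : Finset (Fin h → ℕ) :=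
  Fintype.piFinset fun _ => primeSet N k

/-- The condition `|log (m₁n₁/(m₂n₂))| ≤ 2π/T`. -/
def Close (T : ℝ) (m₁ m₂ n₁ n₂ : ℕ) : Prop :=
  |Real.log ((m₁ * n₁ : ℝ) / (m₂ * n₂ : ℝ))| ≤ 2 * Real.pi / T

/-- Pairs of `h`-tuples of primes `≤ N^{1/k}` whose products `n₁, n₂` make `m₁n₁` and `m₂n₂`
close. -/
noncomputable def closePairs (T : ℝ) (N k h m₁ m₂ : ℕ) : Finset ((Fin h → ℕ) × (Fin h → ℕ)) :=
  (tuples N k h ×ˢ tuples N k h).filter fun x => Close T m₁ m₂ (∏ i, x.1 i) (∏ i, x.2 i)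

lemma mem_primeSet {N k p : ℕ} (hk : 0 < k) (hN : 0 < N) :
    p ∈ primeSet N k ↔ p.Prime ∧ (p : ℝ) ≤ (N : ℝ) ^ ((1 : ℝ) / (k : ℝ)) := by
  simp only [primeSet, Finset.mem_filter, Finset.mem_Icc, and_iff_right_iff_imp]
  rintro ⟨hp, hle⟩
  refine ⟨hp.one_le, ?_⟩
  have h1 : (1 : ℝ) ≤ N := by exact_mod_cast hN
  have hk1 : (1 : ℝ) ≤ k := by exact_mod_cast hk
  have h2 : (N : ℝ) ^ ((1 : ℝ) / (k : ℝ)) ≤ (N : ℝ) ^ (1 : ℝ) :=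
    Real.rpow_le_rpow_of_exponent_le h1 ((div_le_one (by linarith)).2 hk1)
  rw [Real.rpow_one] at h2
  exact_mod_cast hle.trans h2

lemma mem_tuples {N k h : ℕ} {f : Fin h → ℕ} : f ∈ tuples N k h ↔ ∀ i, f i ∈ primeSet N k := by
  simp [tuples]

lemma prime_of_mem {N k p : ℕ} (h : p ∈ primeSet N k) : p.Prime := (Finset.mem_filter.1 h).2.1

lemma card_primeSet_le (N k : ℕ) :
    ((primeSet N k).card : ℝ) ≤ (N : ℝ) ^ ((1 : ℝ) / (k : ℝ)) := by
  have h0 : (0 : ℝ) ≤ (N : ℝ) ^ ((1 : ℝ) / (k : ℝ)) := by positivity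
  have h : primeSet N k ⊆ Finset.Icc 1 ⌊(N : ℝ) ^ ((1 : ℝ) / (k : ℝ))⌋₊ := by
    intro p hp
    have := Finset.mem_filter.1 hp
    exact Finset.mem_Icc.2 ⟨this.2.1.one_le, Nat.le_floor this.2.2⟩
  have h2 := Finset.card_le_card h
  rw [Nat.card_Icc, Nat.add_sub_cancel] at h2
  exact (Nat.cast_le.2 h2).trans (Nat.floor_le h0)

lemma prod_pos_of_mem {N k h : ℕ} {f : Fin h → ℕ} (hf : f ∈ tuples N k h) : 0 < ∏ i, f i :=
  Finset.prod_pos fun i _ => (prime_of_mem (mem_tuples.1 hf i)).pos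

/-- Products of at most `k` primes `≤ N^{1/k}` stay in `{1,…,N}`, so the truncation of the sums
in `Jq` loses nothing. -/
lemma prod_mem_Icc {N k h : ℕ} (hk : 0 < k) (hN : 0 < N) (hh : h ≤ k) {f : Fin h → ℕ}
    (hf : f ∈ tuples N k h) : ∏ i, f i ∈ Finset.Icc 1 N := by
  refine Finset.mem_Icc.2 ⟨prod_pos_of_mem hf, ?_⟩
  have h1 : (1 : ℝ) ≤ N := by exact_mod_cast hN
  have hP : (1 : ℝ) ≤ (N : ℝ) ^ ((1 : ℝ) / (k : ℝ)) := Real.one_le_rpow h1 (by positivity)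
  have : ((∏ i, f i : ℕ) : ℝ) ≤ N := by
    push_cast
    calc ∏ i, (f i : ℝ) ≤ ∏ _i : Fin h, (N : ℝ) ^ ((1 : ℝ) / (k : ℝ)) :=
          Finset.prod_le_prod (fun i _ => by positivity)
            fun i _ => ((mem_primeSet hk hN).1 (mem_tuples.1 hf i)).2
      _ = ((N : ℝ) ^ ((1 : ℝ) / (k : ℝ))) ^ h := by simp
      _ ≤ ((N : ℝ) ^ ((1 : ℝ) / (k : ℝ))) ^ k := pow_le_pow_right₀ hP hh
      _ = N := by rw [one_div]; exact Real.rpow_inv_natCast_pow (by positivity) hk.ne'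
  exact_mod_cast this

lemma qcoef_eq {N k h n : ℕ} (hk : 0 < k) (hN : 0 < N) :
    qcoef N k h n =
      (((tuples N k h).filter fun f => ∏ i, f i = n).card : ℝ) / (h.factorial : ℝ) := by
  unfold qcoef
  congr 2
  rw [← Nat.card_eq_finsetCard]
  refine Nat.card_congr (Equiv.subtypeEquivRight fun f => ?_)
  simp only [Finset.mem_filter, mem_tuples, mem_primeSet hk hN]

/-- Summation against the coefficients of `Q_h` is summation over `h`-tuples of primes. -/
lemma sum_qcoef_mul {N k h : ℕ} (hk : 0 < k) (hN : 0 < N) (hh : h ≤ k) (F : ℕ → ℝ) :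
    ∑ n ∈ Finset.Icc 1 N, qcoef N k h n * F n =
      (∑ f ∈ tuples N k h, F (∏ i, f i)) / (h.factorial : ℝ) := by
  rw [← Finset.sum_fiberwise_of_maps_to (g := fun f : Fin h → ℕ => ∏ i, f i)
    (t := Finset.Icc 1 N) (fun f hf => prod_mem_Icc hk hN hh hf), Finset.sum_div]
  refine Finset.sum_congr rfl fun n _ => ?_
  rw [qcoef_eq hk hN, Finset.sum_congr rfl (g := fun _ => F n)
    (fun f hf => by rw [(Finset.mem_filter.1 hf).2])]
  simp
  ring

lemma Jq_eq {T : ℝ} {𝓜 : Finset ℕ} {N k h : ℕ} (hk : 0 < k) (hN : 0 < N) (hh : h ≤ k) :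
    Jq T 𝓜 N k h = (∑ m₁ ∈ 𝓜, ∑ m₂ ∈ 𝓜, ((closePairs T N k h m₁ m₂).card : ℝ)) /
      (h.factorial : ℝ) ^ 2 := by
  unfold Jq
  rw [Finset.sum_div]
  refine Finset.sum_congr rfl fun m₁ _ => ?_
  rw [Finset.sum_div]
  refine Finset.sum_congr rfl fun m₂ _ => ?_
  have h1 : ∀ n₁ n₂ : ℕ,
      (if |Real.log ((m₁ * n₁ : ℝ) / (m₂ * n₂ : ℝ))| ≤ 2 * Real.pi / T
        then qcoef N k h n₁ * qcoef N k h n₂ else 0) =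
      qcoef N k h n₁ * (qcoef N k h n₂ * if Close T m₁ m₂ n₁ n₂ then 1 else 0) := by
    intro n₁ n₂
    by_cases hc : Close T m₁ m₂ n₁ n₂
    · rw [if_pos hc, if_pos (show |_| ≤ _ from hc)]; ring
    · rw [if_neg hc, if_neg (show ¬ |_| ≤ _ from hc)]; ring
  simp only [h1, ← Finset.mul_sum]
  rw [sum_qcoef_mul hk hN hh (fun n₁ => ∑ n₂ ∈ Finset.Icc 1 N,
    qcoef N k h n₂ * if Close T m₁ m₂ n₁ n₂ then 1 else 0)]
  have h2 : ∀ n₁, ∑ n₂ ∈ Finset.Icc 1 N,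
      (qcoef N k h n₂ * if Close T m₁ m₂ n₁ n₂ then 1 else 0) = _ :=
    fun n₁ => sum_qcoef_mul hk hN hh (fun n₂ => if Close T m₁ m₂ n₁ n₂ then 1 else 0)
  simp only [h2]
  rw [← Finset.sum_div, div_div, ← sq, closePairs, Finset.card_filter, Finset.sum_product]
  push_cast
  rfl

/-! ### Pairs of tuples with coprime products -/

/-- If `c/d < a/b` are fractions of positive integers with `a, d ≤ N`, then
`log (a/b) - log (c/d) ≥ 1/(ad) ≥ N⁻²`. -/
lemma one_le_log_sub {N a b c d : ℕ} (ha : 0 < a) (hb : 0 < b) (hc : 0 < c)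
    (hd : 0 < d) (haN : a ≤ N) (hdN : d ≤ N) (hlt : c * b < a * d) :
    1 ≤ (N : ℝ) ^ 2 * (Real.log ((a : ℝ) / b) - Real.log ((c : ℝ) / d)) := by
  have ha' : (0 : ℝ) < a := by exact_mod_cast ha
  have hb' : (0 : ℝ) < b := by exact_mod_cast hb
  have hc' : (0 : ℝ) < c := by exact_mod_cast hc
  have hd' : (0 : ℝ) < d := by exact_mod_cast hd
  have haN' : (a : ℝ) ≤ N := by exact_mod_cast haN
  have hdN' : (d : ℝ) ≤ N := by exact_mod_cast hdN
  have hlt' : (c : ℝ) * b + 1 ≤ a * d := by exact_mod_cast hlt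
  have hlog : Real.log ((a : ℝ) / b) - Real.log ((c : ℝ) / d) =
      Real.log ((a * d) / (c * b)) := by
    rw [← Real.log_div (by positivity) (by positivity)]
    congr 1
    field_simp
  have h1 := Real.one_sub_inv_le_log_of_pos (x := ((a : ℝ) * d) / (c * b)) (by positivity)
  rw [hlog]
  have h2 : 1 / ((a : ℝ) * d) ≤ 1 - (((a : ℝ) * d) / (c * b))⁻¹ := by
    rw [inv_div, le_sub_iff_add_le, ← add_div, div_le_one (by positivity)]
    linarith
  have h3 : (a : ℝ) * d ≤ N ^ 2 := by
    rw [sq]; exact mul_le_mul haN' hdN' hd'.le (by linarith)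
  calc (1 : ℝ) = (a * d) * (1 / (a * d)) := by field_simp
    _ ≤ N ^ 2 * (1 / (a * d)) := by gcongr
    _ ≤ _ := by gcongr; exact h2.trans h1

/-- For fixed `m₁, m₂` there are `≪ 1 + N²/T` coprime pairs in `{1,…,N}²` meeting the closeness
condition; the constant `13` exceeds `4π`. -/
lemma card_coprime_pairs_le {T : ℝ} (hT : 20 ≤ T) {N m₁ m₂ : ℕ} (hm₁ : 0 < m₁) (hm₂ : 0 < m₂) :
    ((((Finset.Icc 1 N) ×ˢ (Finset.Icc 1 N)).filter fun x : ℕ × ℕ =>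
      x.1.Coprime x.2 ∧ Close T m₁ m₂ x.1 x.2).card : ℝ) ≤ 1 + 13 * (N : ℝ) ^ 2 * T⁻¹ := by
  set s := ((Finset.Icc 1 N) ×ˢ (Finset.Icc 1 N)).filter fun x : ℕ × ℕ =>
      x.1.Coprime x.2 ∧ Close T m₁ m₂ x.1 x.2 with hs
  set δ := 2 * Real.pi / T with hδ
  set L := Real.log ((m₁ : ℝ) / m₂) with hL
  have hδ0 : 0 ≤ δ := by positivity
  -- The rescaled logarithms are 1-separated in `[0, 2δN²]`, so they have distinct integer parts.
  let φ : ℕ × ℕ → ℕ := fun x => ⌊(N : ℝ) ^ 2 * (Real.log ((x.1 : ℝ) / x.2) + L + δ)⌋₊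
  have hmem : ∀ x ∈ s, 0 < x.1 ∧ x.1 ≤ N ∧ 0 < x.2 ∧ x.2 ≤ N ∧ x.1.Coprime x.2 ∧
      0 ≤ Real.log ((x.1 : ℝ) / x.2) + L + δ ∧ Real.log ((x.1 : ℝ) / x.2) + L + δ ≤ 2 * δ := by
    intro x hx
    simp only [hs, Finset.mem_filter, Finset.mem_product, Finset.mem_Icc] at hx
    obtain ⟨⟨⟨h1, h2⟩, h3, h4⟩, h5, h6⟩ := hx
    have e1 : (0 : ℝ) < x.1 := by exact_mod_cast h1
    have e2 : (0 : ℝ) < x.2 := by exact_mod_cast h3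
    have e3 : (0 : ℝ) < m₁ := by exact_mod_cast hm₁
    have e4 : (0 : ℝ) < m₂ := by exact_mod_cast hm₂
    have hlog : Real.log ((m₁ * x.1 : ℝ) / (m₂ * x.2 : ℝ)) =
        Real.log ((x.1 : ℝ) / x.2) + L := by
      rw [hL, ← Real.log_mul (by positivity) (by positivity)]
      congr 1
      field_simp
    unfold Close at h6
    rw [hlog, abs_le] at h6
    exact ⟨h1, h2, h3, h4, h5, by linarith [h6.1], by linarith [h6.2]⟩
  have hmaps : ∀ x ∈ s, φ x ∈ Finset.range (⌊(N : ℝ) ^ 2 * (2 * δ)⌋₊ + 1) := by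
    intro x hx
    rw [Finset.mem_range, Nat.lt_succ_iff]
    obtain ⟨-, -, -, -, -, -, h⟩ := hmem x hx
    exact Nat.floor_le_floor (by gcongr)
  have hsep : ∀ x ∈ s, ∀ y ∈ s, φ x = φ y → ¬ y.1 * x.2 < x.1 * y.2 := by
    intro x hx y hy hxy hlt
    obtain ⟨hx1, hx2, hx3, hx4, -, hx6, -⟩ := hmem x hx
    obtain ⟨hy1, hy2, hy3, hy4, -, hy6, -⟩ := hmem y hy
    have h1 := one_le_log_sub hx1 hx3 hy1 hy3 hx2 hy4 hlt
    have h2 := Nat.floor_le (mul_nonneg (sq_nonneg (N : ℝ)) hy6)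
    have h3 := Nat.lt_floor_add_one ((N : ℝ) ^ 2 * (Real.log ((x.1 : ℝ) / x.2) + L + δ))
    have h4 : (⌊(N : ℝ) ^ 2 * (Real.log ((x.1 : ℝ) / x.2) + L + δ)⌋₊ : ℝ) =
      (⌊(N : ℝ) ^ 2 * (Real.log ((y.1 : ℝ) / y.2) + L + δ)⌋₊ : ℝ) := congrArg Nat.cast hxy
    linarith
  have hinj : Set.InjOn φ s := by
    intro x hx y hy hxy
    have heq : x.1 * y.2 = y.1 * x.2 :=
      le_antisymm (not_lt.1 (hsep x hx y hy hxy)) (not_lt.1 (hsep y hy x hx hxy.symm))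
    obtain ⟨hx1, -, hx3, -, hx5, -⟩ := hmem x hx
    obtain ⟨hy1, -, hy3, -, hy5, -⟩ := hmem y hy
    have a1 : x.1 ∣ y.1 := hx5.dvd_of_dvd_mul_right (heq ▸ Dvd.intro _ rfl)
    have a2 : y.1 ∣ x.1 := hy5.dvd_of_dvd_mul_right (heq.symm ▸ Dvd.intro _ rfl)
    have e1 := Nat.dvd_antisymm a1 a2
    rw [e1] at heq
    exact Prod.ext e1 (Nat.eq_of_mul_eq_mul_left hy1 heq).symm
  have hcard := Finset.card_le_card_of_injOn φ hmaps hinj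
  rw [Finset.card_range] at hcard
  have hcard' : (s.card : ℝ) ≤ (⌊(N : ℝ) ^ 2 * (2 * δ)⌋₊ : ℝ) + 1 := by exact_mod_cast hcard
  have h5 := Nat.floor_le (a := (N : ℝ) ^ 2 * (2 * δ)) (by positivity)
  have h6 : (N : ℝ) ^ 2 * (2 * δ) ≤ 13 * (N : ℝ) ^ 2 * T⁻¹ := by
    have : (N : ℝ) ^ 2 * (2 * δ) = (4 * Real.pi) * ((N : ℝ) ^ 2 * T⁻¹) := by
      rw [hδ]; ring
    rw [this, mul_assoc 13]
    exact mul_le_mul_of_nonneg_right (by linarith [Real.pi_lt_d2]) (by positivity)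
  linarith

/-- The entries of a tuple with product `n` are among the prime factors of `n`, of which there
are at most `h`. -/
lemma card_fiber_le (N k h n : ℕ) :
    ((tuples N k h).filter fun f => ∏ i, f i = n).card ≤ h ^ h := by
  rcases Finset.eq_empty_or_nonempty ((tuples N k h).filter fun f => ∏ i, f i = n) with he | ⟨g, hg⟩
  · simp [he]
  have hn : ∀ f ∈ (tuples N k h).filter fun f => ∏ i, f i = n,
      (∀ i, (f i).Prime) ∧ ∏ i, f i = n := fun f hf =>
    ⟨fun i => prime_of_mem (mem_tuples.1 (Finset.mem_filter.1 hf).1 i), (Finset.mem_filter.1 hf).2⟩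
  have hn0 : n ≠ 0 := by
    rw [← (hn g hg).2]
    exact Finset.prod_ne_zero_iff.2 fun i _ => ((hn g hg).1 i).ne_zero
  have hcard : n.primeFactors.card ≤ h := by
    have : n.primeFactors ⊆ Finset.univ.image g := by
      intro p hp
      have hpp := Nat.prime_of_mem_primeFactors hp
      have hd := Nat.dvd_of_mem_primeFactors hp
      rw [← (hn g hg).2, hpp.prime.dvd_finsetProd_iff] at hd
      obtain ⟨i, -, hi⟩ := hd
      exact Finset.mem_image.2 ⟨i, Finset.mem_univ _,
        ((Nat.prime_dvd_prime_iff_eq hpp ((hn g hg).1 i)).1 hi).symm⟩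
    exact (Finset.card_le_card this).trans (Finset.card_image_le.trans (by simp))
  have hsub : (tuples N k h).filter (fun f => ∏ i, f i = n) ⊆
      Fintype.piFinset fun _ => n.primeFactors := by
    intro f hf
    refine Fintype.mem_piFinset.2 fun i => Nat.mem_primeFactors.2 ⟨(hn f hf).1 i, ?_, hn0⟩
    rw [← (hn f hf).2]
    exact Finset.dvd_prod_of_mem f (Finset.mem_univ i)
  refine (Finset.card_le_card hsub).trans ?_
  rw [Fintype.card_piFinset, Finset.prod_const, Finset.card_univ, Fintype.card_fin]
  exact Nat.pow_le_pow_left hcard h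

/-- The contribution of the pairs of tuples with coprime products. -/
lemma card_coprime_tuples_le {T : ℝ} (hT : 20 ≤ T) {N k h m₁ m₂ : ℕ} (hk : 0 < k) (hN : 0 < N)
    (hh : h ≤ k) (hm₁ : 0 < m₁) (hm₂ : 0 < m₂) :
    (((closePairs T N k h m₁ m₂).filter fun x =>
      (∏ i, x.1 i).Coprime (∏ i, x.2 i)).card : ℝ) ≤
      (h : ℝ) ^ (2 * h) * (1 + 13 * (N : ℝ) ^ 2 * T⁻¹) := by
  set A := (closePairs T N k h m₁ m₂).filter fun x => (∏ i, x.1 i).Coprime (∏ i, x.2 i) with hA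
  set s := ((Finset.Icc 1 N) ×ˢ (Finset.Icc 1 N)).filter fun x : ℕ × ℕ =>
      x.1.Coprime x.2 ∧ Close T m₁ m₂ x.1 x.2 with hs
  have hmaps : ∀ x ∈ A, ((∏ i, x.1 i, ∏ i, x.2 i) : ℕ × ℕ) ∈ s := by
    intro x hx
    simp only [hA, closePairs, Finset.mem_filter, Finset.mem_product] at hx
    exact Finset.mem_filter.2 ⟨Finset.mem_product.2 ⟨prod_mem_Icc hk hN hh hx.1.1.1,
      prod_mem_Icc hk hN hh hx.1.1.2⟩, hx.2, hx.1.2⟩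
  have hfib : ∀ y ∈ s,
      (A.filter fun x => ((∏ i, x.1 i, ∏ i, x.2 i) : ℕ × ℕ) = y).card ≤ h ^ (2 * h) := by
    rintro ⟨a, b⟩ -
    have hsub : (A.filter fun x => ((∏ i, x.1 i, ∏ i, x.2 i) : ℕ × ℕ) = (a, b)) ⊆
        ((tuples N k h).filter fun f => ∏ i, f i = a) ×ˢ
          ((tuples N k h).filter fun f => ∏ i, f i = b) := by
      intro x hx
      simp only [hA, closePairs, Finset.mem_filter, Finset.mem_product, Prod.mk.injEq] at hx ⊢
      tauto
    refine (Finset.card_le_card hsub).trans ?_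
    rw [Finset.card_product, two_mul, pow_add]
    exact Nat.mul_le_mul (card_fiber_le N k h a) (card_fiber_le N k h b)
  have h1 := Finset.card_le_mul_card_image_of_maps_to hmaps _ hfib
  calc (A.card : ℝ) ≤ (h : ℝ) ^ (2 * h) * (s.card : ℝ) := by exact_mod_cast h1
    _ ≤ _ := by gcongr; exact card_coprime_pairs_le hT hm₁ hm₂

/-! ### Pairs of tuples with a common prime, and the recursion -/

/-- Deleting a common prime sends close pairs with `f i = g j` injectively to triples consisting
of that prime and a close pair of shorter tuples. -/
lemma card_common_le (T : ℝ) (N k h m₁ m₂ : ℕ) (i j : Fin (h + 1)) :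
    ((closePairs T N k (h + 1) m₁ m₂).filter fun x => x.1 i = x.2 j).card ≤
      (primeSet N k).card * (closePairs T N k h m₁ m₂).card := by
  rw [← Finset.card_product]
  refine Finset.card_le_card_of_injOn
    (fun x => (x.1 i, (fun l => x.1 (i.succAbove l), fun l => x.2 (j.succAbove l)))) ?_ ?_
  · intro x hx
    simp only [closePairs, Finset.coe_filter, Finset.mem_filter, Finset.mem_product,
      Set.mem_ofPred_eq] at hx
    obtain ⟨⟨⟨h1, h2⟩, h3⟩, h4⟩ := hx
    have h1' := mem_tuples.1 h1
    have h2' := mem_tuples.1 h2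
    refine Finset.mem_product.2 ⟨h1' i, Finset.mem_filter.2 ⟨Finset.mem_product.2
      ⟨mem_tuples.2 fun l => h1' _, mem_tuples.2 fun l => h2' _⟩, ?_⟩⟩
    have hp : ((x.1 i : ℕ) : ℝ) ≠ 0 := by exact_mod_cast (prime_of_mem (h1' i)).ne_zero
    rw [Fin.prod_univ_succAbove _ i, Fin.prod_univ_succAbove _ j, ← h4] at h3
    unfold Close at h3 ⊢
    rw [Nat.cast_mul, Nat.cast_mul, mul_left_comm, mul_left_comm (m₂ : ℝ),
      mul_div_mul_left _ _ hp] at h3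
    exact h3
  · intro x hx y hy hxy
    have hx' := (Finset.mem_filter.1 hx).2
    have hy' := (Finset.mem_filter.1 hy).2
    simp only [Prod.mk.injEq] at hxy
    obtain ⟨h1, h2, h3⟩ := hxy
    refine Prod.ext (funext fun l => ?_) (funext fun l => ?_)
    · rcases Fin.eq_self_or_eq_succAbove i l with rfl | ⟨l, rfl⟩
      · exact h1
      · exact congrFun h2 l
    · rcases Fin.eq_self_or_eq_succAbove j l with rfl | ⟨l, rfl⟩
      · rw [← hx', ← hy', h1]
      · exact congrFun h3 l

/-- Two tuples of primes have coprime products unless they share an entry. -/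
lemma closePairs_subset (T : ℝ) (N k h m₁ m₂ : ℕ) :
    closePairs T N k h m₁ m₂ ⊆
      ((closePairs T N k h m₁ m₂).filter fun x => (∏ i, x.1 i).Coprime (∏ i, x.2 i)) ∪
      (Finset.univ : Finset (Fin h × Fin h)).biUnion fun ij =>
        (closePairs T N k h m₁ m₂).filter fun x => x.1 ij.1 = x.2 ij.2 := by
  intro x hx
  by_cases hc : (∏ i, x.1 i).Coprime (∏ i, x.2 i)
  · exact Finset.mem_union_left _ (Finset.mem_filter.2 ⟨hx, hc⟩)
  · have hx2 := Finset.mem_product.1 (Finset.mem_filter.1 hx).1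
    simp only [Nat.coprime_prod_left_iff, Nat.coprime_prod_right_iff, Finset.mem_univ,
      true_implies, not_forall] at hc
    obtain ⟨j, i, hij⟩ := hc
    rw [Nat.coprime_primes (prime_of_mem (mem_tuples.1 hx2.1 _))
      (prime_of_mem (mem_tuples.1 hx2.2 _)), not_not] at hij
    refine Finset.mem_union_right _ (Finset.mem_biUnion.2 ⟨(i, j), Finset.mem_univ _,
      Finset.mem_filter.2 ⟨hx, hij⟩⟩)

/-- The bound for fixed `m₁, m₂`, with `k = h + 1`: the factor `(h + 1)²` counts the positions
`(i, j)` of a common prime. -/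
lemma card_closePairs_le {T : ℝ} (hT : 20 ≤ T) {N h m₁ m₂ : ℕ} (hN : 0 < N)
    (hm₁ : 0 < m₁) (hm₂ : 0 < m₂) :
    ((closePairs T N (h + 1) (h + 1) m₁ m₂).card : ℝ) ≤
      ((h + 1 : ℕ) : ℝ) ^ (2 * (h + 1)) * (1 + 13 * (N : ℝ) ^ 2 * T⁻¹) +
      ((h + 1 : ℕ) : ℝ) ^ 2 * ((N : ℝ) ^ ((1 : ℝ) / ((h + 1 : ℕ) : ℝ)) *
        ((closePairs T N (h + 1) h m₁ m₂).card : ℝ)) := by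
  have h1 := (Finset.card_le_card (closePairs_subset T N (h + 1) (h + 1) m₁ m₂)).trans
    (Finset.card_union_le _ _)
  have h2 := (Finset.card_biUnion_le (s := (Finset.univ : Finset (Fin (h + 1) × Fin (h + 1))))
    (t := fun ij => (closePairs T N (h + 1) (h + 1) m₁ m₂).filter
      fun x => x.1 ij.1 = x.2 ij.2)).trans (Finset.sum_le_card_nsmul _ _ _
        fun ij _ => card_common_le T N (h + 1) h m₁ m₂ ij.1 ij.2)
  have h3 := h1.trans (Nat.add_le_add_left h2 _)
  rw [Finset.card_univ, Fintype.card_prod, Fintype.card_fin, smul_eq_mul, ← sq] at h3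
  have h4 := card_coprime_tuples_le hT (k := h + 1) (by omega) hN le_rfl hm₁ hm₂
  refine (Nat.cast_le (α := ℝ).2 h3).trans ?_
  rw [Nat.cast_add, Nat.cast_mul, Nat.cast_mul, Nat.cast_pow]
  gcongr
  exact card_primeSet_le N (h + 1)

/-- Lemma 9 of Heath-Brown, "The Differences Between Consecutive Smooth Numbers":
for every positive integer `k` there is `C(k) > 0` such that for every positive
integer `N` there exists `0 ≤ h ≤ k-1` with
`𝓙(𝓜,Q) ≤ C(k)(N²R²T⁻¹ + R² + N^{(k-h)/k} 𝓙(𝓜,Q_h))`, where `Q = Q_k`. -/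
theorem Jq_reduction :
    ∀ k : ℕ, 0 < k → ∃ C : ℝ, 0 < C ∧
      ∀ T : ℝ, 20 ≤ T →
      ∀ 𝓜 : Finset ℕ, (∀ m ∈ 𝓜, 0 < m ∧ (m : ℝ) ≤ T) →
      ∀ N : ℕ, 0 < N →
        ∃ h : ℕ, h ≤ k - 1 ∧
          Jq T 𝓜 N k k ≤
            C * ((N : ℝ) ^ 2 * (𝓜.card : ℝ) ^ 2 * T⁻¹ + (𝓜.card : ℝ) ^ 2 +
              (N : ℝ) ^ (((k : ℝ) - (h : ℝ)) / (k : ℝ)) * Jq T 𝓜 N k h) := by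
  intro k hk
  obtain ⟨h, rfl⟩ : ∃ h, k = h + 1 := ⟨k - 1, by omega⟩
  set A : ℝ := ((h + 1 : ℕ) : ℝ) ^ (2 * (h + 1)) with hA
  set B : ℝ := ((h + 1 : ℕ) : ℝ) ^ 2 * (h.factorial : ℝ) ^ 2 with hB
  have hA0 : 0 < A := by positivity
  have hB0 : 0 < B := by positivity
  refine ⟨13 * A + B, by positivity, fun T hT 𝓜 h𝓜 N hN => ⟨h, by omega, ?_⟩⟩
  have hexp : (((h + 1 : ℕ) : ℝ) - (h : ℝ)) / ((h + 1 : ℕ) : ℝ) = 1 / ((h + 1 : ℕ) : ℝ) := by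
    congr 1
    push_cast
    ring
  rw [hexp]
  set P : ℝ := (N : ℝ) ^ ((1 : ℝ) / ((h + 1 : ℕ) : ℝ)) with hP
  set D : ℝ := ∑ m₁ ∈ 𝓜, ∑ m₂ ∈ 𝓜, ((closePairs T N (h + 1) (h + 1) m₁ m₂).card : ℝ) with hD
  set E : ℝ := ∑ m₁ ∈ 𝓜, ∑ m₂ ∈ 𝓜, ((closePairs T N (h + 1) h m₁ m₂).card : ℝ) with hE
  have hDE : D ≤ (𝓜.card : ℝ) ^ 2 * (A * (1 + 13 * (N : ℝ) ^ 2 * T⁻¹)) +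
      ((h + 1 : ℕ) : ℝ) ^ 2 * (P * E) := by
    have : D ≤ ∑ m₁ ∈ 𝓜, ∑ m₂ ∈ 𝓜, (A * (1 + 13 * (N : ℝ) ^ 2 * T⁻¹) +
        ((h + 1 : ℕ) : ℝ) ^ 2 * (P * ((closePairs T N (h + 1) h m₁ m₂).card : ℝ))) :=
      Finset.sum_le_sum fun m₁ h₁ => Finset.sum_le_sum fun m₂ h₂ =>
        card_closePairs_le hT hN (h𝓜 m₁ h₁).1 (h𝓜 m₂ h₂).1
    refine this.trans (le_of_eq ?_)
    simp only [Finset.sum_add_distrib, ← Finset.mul_sum, Finset.sum_const, nsmul_eq_mul]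
    ring
  have hJk : Jq T 𝓜 N (h + 1) (h + 1) ≤ D := by
    rw [Jq_eq hk hN le_rfl]
    have hf : (1 : ℝ) ≤ ((h + 1).factorial : ℝ) := Nat.one_le_cast.2 (Nat.factorial_pos _)
    have hD0 : 0 ≤ D := Finset.sum_nonneg fun _ _ =>
      Finset.sum_nonneg fun _ _ => Nat.cast_nonneg _
    exact div_le_self hD0 (one_le_pow₀ hf)
  have hJh : E = (h.factorial : ℝ) ^ 2 * Jq T 𝓜 N (h + 1) h := by
    rw [Jq_eq hk hN (by omega), mul_div_cancel₀ _ (pow_ne_zero 2 (Nat.cast_ne_zero.2 (Nat.factorial_ne_zero h)))]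
  have hJ0 : 0 ≤ Jq T 𝓜 N (h + 1) h := by
    rw [Jq_eq hk hN (by omega)]
    exact div_nonneg (Finset.sum_nonneg fun _ _ => Finset.sum_nonneg fun _ _ => Nat.cast_nonneg _)
      (sq_nonneg _)
  have hT0 : 0 < T := by linarith
  have hP0 : 0 ≤ P := Real.rpow_nonneg (Nat.cast_nonneg N) _
  rw [hJh] at hDE
  set X : ℝ := (N : ℝ) ^ 2 * (𝓜.card : ℝ) ^ 2 * T⁻¹ with hX
  set Y : ℝ := (𝓜.card : ℝ) ^ 2 with hY
  set Z : ℝ := P * Jq T 𝓜 N (h + 1) h with hZ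
  have hX0 : 0 ≤ X := by positivity
  have hY0 : 0 ≤ Y := by positivity
  have hZ0 : 0 ≤ Z := mul_nonneg hP0 hJ0
  clear_value A B P D E X Y Z
  calc Jq T 𝓜 N (h + 1) (h + 1) ≤ D := hJk
    _ ≤ _ := hDE
    _ = A * Y + 13 * A * X + B * Z := by rw [hX, hZ, hB]; ring
    _ ≤ (13 * A + B) * (X + Y + Z) := by
      nlinarith [mul_nonneg hA0.le hX0, mul_nonneg hA0.le hY0, mul_nonneg hA0.le hZ0,
        mul_nonneg hB0.le hX0, mul_nonneg hB0.le hY0, mul_nonneg hB0.le hZ0]
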